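/- arXiv:2605.14778 — 4 statements merged into one kernel-verified Lean document; each statement's English description precedes it below -/
import Mathlib

section
/- (General Simonenko localization principle) Let P ∈ Ψ_T(H), i.e., P is a bounded operator on H such that M_φ P M_ψ is compact for all φ, ψ ∈ C(T) with disjoint supports, and assume that the representation C(T) → B(H) has the property of strong convergence to 0. Then P is locally invertible on T if, and only if, P is Fredholm. -/
open Filter Topology

/-- A bounded operator on a Hilbert space is Fredholm if it is invertible modulo
compact operators (Atkinson's theorem). -/
def IsFredholm {H : Type*} [NormedAddCommGroup H] [InnerProductSpace ℂ H] [CompleteSpace H]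
    (P : H →L[ℂ] H) : Prop :=
  ∃ S : H →L[ℂ] H,
    IsCompactOperator ⇑(S.comp P - ContinuousLinearMap.id ℂ H) ∧
    IsCompactOperator ⇑(P.comp S - ContinuousLinearMap.id ℂ H)

/-- The inclusion `ℝ → ℂ` as a continuous map, used to regard a continuous real-valued
function as a continuous complex-valued one. -/
noncomputable def ofRealCM : C(ℝ, ℂ) := ⟨Complex.ofReal, Complex.continuous_ofReal⟩

/-- `P` is locally invertible at `x ∈ T` (with respect to the representation `π` of
`C(T)`): there are a neighbourhood `V` of `x` and bounded operators `Q₁, Q₂` with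
`Q₁ P M_f = M_f = M_f P Q₂` for every `f ∈ C(T)` supported in `V`. -/
def LocallyInvertibleAt {T : Type*} [TopologicalSpace T]
    {H : Type*} [NormedAddCommGroup H] [InnerProductSpace ℂ H] [CompleteSpace H]
    (π : C(T, ℂ) →⋆ₐ[ℂ] (H →L[ℂ] H)) (P : H →L[ℂ] H) (x : T) : Prop :=
  ∃ V ∈ 𝓝 x, ∃ Q₁ Q₂ : H →L[ℂ] H, ∀ f : C(T, ℂ), tsupport f ⊆ V →
    Q₁.comp (P.comp (π f)) = π f ∧ (π f).comp (P.comp Q₂) = π f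

/-- The representation `π` of `C(T)` has the property of strong convergence to `0`:
for every `x ∈ T`, `h ∈ H` and `ε > 0` there is a neighbourhood `V` of `x` such that
`‖M_χ h‖ < ε` for every continuous `χ : T → [0,1]` equal to `1` near `x` and
supported in `V`. -/
def StrongConvergenceToZero {T : Type*} [TopologicalSpace T]
    {H : Type*} [NormedAddCommGroup H] [InnerProductSpace ℂ H] [CompleteSpace H]
    (π : C(T, ℂ) →⋆ₐ[ℂ] (H →L[ℂ] H)) : Prop :=
  ∀ (x : T) (h : H) (ε : ℝ), 0 < ε → ∃ V ∈ 𝓝 x,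
    ∀ χ : C(T, ℝ), (∀ t, χ t ∈ Set.Icc (0 : ℝ) 1) →
      (∀ᶠ t in 𝓝 x, χ t = 1) → tsupport χ ⊆ V →
      ‖π (ofRealCM.comp χ) h‖ < ε

/-!
If the supports of `φ` and `ψ` are disjoint then `φ P ψ` is compact; the heart of the matter is
that this forces every commutator `[M_f, P]` to be compact. For real `f`, consider the entire
function `F z = e^{z M_f} P e^{-z M_f}` with values in `B(H)` modulo the compact operators. It is
bounded on the imaginary axis, where it is a conjugation by unitaries. Cutting `P` with a fine
partition of unity leaves, modulo compact operators, only pieces on which `f` is almost constant,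
and a constant drops out of the conjugation; hence `‖F z‖ = O(e^{ε ‖z‖})` for every `ε > 0`.
Phragmén–Lindelöf and Liouville make `F` constant, and its derivative at `0` is `[M_f, P]`.

Local inverses then glue to left and right inverses modulo compact operators. Conversely, if
`S P = 1 + K` with `K` compact, strong convergence to zero makes `K M_χ` small for a cutoff `χ`
near `x`, so that `1 + K M_χ` is invertible, and it agrees with `S P` on the functions supported
where `χ = 1`.
-/

namespace Simonenko

open Asymptotics Bornology NormedSpace

section EntireFunctions

variable {E : Type*} [NormedAddCommGroup E] {F : ℂ → E}

/-- A vector-valued function on `ℂ` has minimal exponential type if it grows more slowly than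
`e^{ε ‖z‖}` for every `ε > 0`. -/
def HasMinimalExpType (F : ℂ → E) : Prop :=
  ∀ ε : ℝ, 0 < ε → F =O[cobounded ℂ] fun z ↦ Real.exp (ε * ‖z‖)

theorem HasMinimalExpType.comp_neg (hF : HasMinimalExpType F) :
    HasMinimalExpType fun z ↦ F (-z) := fun ε hε ↦ by
  simpa only [Function.comp_def, norm_neg] using (hF ε hε).comp_tendsto tendsto_neg_cobounded

variable [NormedSpace ℂ E] {C : ℝ}

theorem norm_exp_neg_mul_ofReal (ε : ℝ) (z : ℂ) :
    ‖Complex.exp (-ε * z)‖ = Real.exp (-(ε * z.re)) := by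
  simp [Complex.norm_exp]

theorem HasMinimalExpType.isBoundedUnder_exp_neg_mul_smul (hF : HasMinimalExpType F) {ε : ℝ}
    (hε : 0 < ε) :
    IsBoundedUnder (· ≤ ·) atTop fun x : ℝ ↦ ‖Complex.exp (-ε * x) • F x‖ := by
  obtain ⟨B, hB⟩ := ((hF ε hε).comp_tendsto
    (RCLike.tendsto_ofReal_atTop_cobounded ℂ)).bound
  refine ⟨B, eventually_map.2 ?_⟩
  filter_upwards [hB, eventually_ge_atTop 0] with x hx hx0
  have hFx : ‖F x‖ ≤ B * Real.exp (ε * x) := by simpa [abs_of_nonneg hx0] using hx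
  calc ‖Complex.exp (-ε * x) • F x‖ = Real.exp (-(ε * x)) * ‖F x‖ := by
        rw [norm_smul, norm_exp_neg_mul_ofReal, Complex.ofReal_re]
    _ ≤ Real.exp (-(ε * x)) * (B * Real.exp (ε * x)) := by gcongr
    _ = B := by rw [mul_left_comm, ← Real.exp_add, neg_add_cancel, Real.exp_zero, mul_one]

theorem HasMinimalExpType.norm_exp_neg_mul_smul_le (hF : HasMinimalExpType F)
    (hd : Differentiable ℂ F) (him : ∀ y : ℝ, ‖F (y * Complex.I)‖ ≤ C) {ε : ℝ} (hε : 0 < ε)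
    {z : ℂ} (hz : 0 ≤ z.re) : ‖Complex.exp (-ε * z) • F z‖ ≤ C := by
  refine PhragmenLindelof.right_half_plane_of_bounded_on_real
    (f := fun z ↦ Complex.exp (-ε * z) • F z) (Differentiable.diffContOnCl (by fun_prop))
    ⟨1, one_lt_two, ε + ε, ?_⟩ (hF.isBoundedUnder_exp_neg_mul_smul hε) (fun y ↦ ?_) hz
  · have hexp : (fun z : ℂ ↦ Complex.exp (-ε * z)) =O[cobounded ℂ]
        fun z ↦ Real.exp (ε * ‖z‖) := .of_norm_le fun z ↦ by
      rw [norm_exp_neg_mul_ofReal, ← mul_neg]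
      gcongr
      exact (neg_le_abs _).trans (Complex.abs_re_le_norm z)
    refine ((hexp.smul (hF ε hε)).mono inf_le_left).congr_right fun z ↦ ?_
    rw [smul_eq_mul, ← Real.exp_add, Real.rpow_one, add_mul]
  · rw [norm_smul, norm_exp_neg_mul_ofReal]
    simpa using him y

theorem HasMinimalExpType.norm_le_of_re_nonneg (hF : HasMinimalExpType F)
    (hd : Differentiable ℂ F) (him : ∀ y : ℝ, ‖F (y * Complex.I)‖ ≤ C)
    {z : ℂ} (hz : 0 ≤ z.re) : ‖F z‖ ≤ C := by
  have hlim : Tendsto (fun ε : ℝ ↦ ‖Complex.exp (-ε * z) • F z‖) (𝓝[>] 0) (𝓝 ‖F z‖) :=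
    (Continuous.tendsto' (by fun_prop) _ _ (by simp)).mono_left nhdsWithin_le_nhds
  refine le_of_tendsto hlim ?_
  filter_upwards [self_mem_nhdsWithin] with ε hε
  exact hF.norm_exp_neg_mul_smul_le hd him hε hz

theorem HasMinimalExpType.norm_le (hF : HasMinimalExpType F) (hd : Differentiable ℂ F)
    (him : ∀ y : ℝ, ‖F (y * Complex.I)‖ ≤ C) (z : ℂ) : ‖F z‖ ≤ C := by
  rcases le_total 0 z.re with hz | hz
  · exact hF.norm_le_of_re_nonneg hd him hz
  · simpa using hF.comp_neg.norm_le_of_re_nonneg (z := -z) (by fun_prop)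
      (fun y ↦ by simpa using him (-y)) (by simpa using hz)

theorem HasMinimalExpType.apply_eq_apply (hF : HasMinimalExpType F) (hd : Differentiable ℂ F)
    (him : ∀ y : ℝ, ‖F (y * Complex.I)‖ ≤ C) (z w : ℂ) : F z = F w :=
  hd.apply_eq_apply_of_bounded
    (isBounded_iff_forall_norm_le.2 ⟨C, Set.forall_mem_range.2 (hF.norm_le hd him)⟩) z w

end EntireFunctions

section ExpConj

variable {A : Type*} [NormedRing A] [NormedAlgebra ℂ A]

/-- The conjugate `e^{zx} a e^{-zx}` of `a` by the complex one-parameter group generated by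
`x`, as a function of `z`. -/
noncomputable def expConj (x a : A) (z : ℂ) : A :=
  exp (z • x) * a * exp (z • -x)

variable [CompleteSpace A]

theorem differentiable_expConj (x a : A) : Differentiable ℂ (expConj x a) := by
  unfold expConj
  fun_prop

theorem hasDerivAt_expConj_zero (x a : A) : HasDerivAt (expConj x a) (x * a - a * x) 0 := by
  have hleft := (hasDerivAt_exp_smul_const x (0 : ℂ)).mul_const a
  have hright := hasDerivAt_exp_smul_const (-x) (0 : ℂ)
  exact (hleft.mul hright).congr_deriv (by simp [sub_eq_add_neg])

theorem expConj_sub_algebraMap (x a : A) (c z : ℂ) :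
    expConj (x - algebraMap ℂ A c) a z = expConj x a z := by
  let +nondep : NormedAlgebra ℚ A := .restrictScalars ℚ ℂ A
  have exp_sub (w : ℂ) : exp (w • (x - algebraMap ℂ A c)) = exp (-(w * c)) • exp (w • x) := by
    rw [Algebra.smul_def (exp _), algebraMap_exp_comm, ← exp_add_of_commute (Algebra.commutes _ _),
      map_neg, map_mul, smul_sub, Algebra.smul_def w (algebraMap ℂ A c), neg_add_eq_sub]
  have exp_cancel : exp (-(-z * c)) * exp (-(z * c)) = 1 := by
    rw [← exp_add, neg_mul, neg_neg, add_neg_cancel, exp_zero]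
  simp only [expConj, smul_neg, ← neg_smul, exp_sub, smul_mul_assoc, mul_smul_comm, smul_smul,
    exp_cancel, one_smul]

theorem norm_expConj_mul_I {A : Type*} [CStarAlgebra A] {x : A} (hx : IsSelfAdjoint x) (a : A)
    (y : ℝ) : ‖expConj x a (y * Complex.I)‖ = ‖a‖ := by
  have exp_coe (s : ℝ) : exp (((s : ℂ) * Complex.I) • x)
      = selfAdjoint.expUnitary ⟨s • x, (IsSelfAdjoint.all s).smul hx⟩ := by
    rw [selfAdjoint.expUnitary_coe, mul_comm, mul_smul, Complex.coe_smul]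
  rw [expConj, smul_neg, ← neg_smul, ← neg_mul, ← Complex.ofReal_neg, exp_coe, exp_coe,
    CStarRing.norm_mul_coe_unitary, CStarRing.norm_coe_unitary_mul]

end ExpConj

section ContinuousFunctions

variable {T : Type*} [TopologicalSpace T]

theorem tsupport_ofRealCM_comp (f : C(T, ℝ)) : tsupport (ofRealCM.comp f) = tsupport f :=
  congrArg closure <| by ext t; simp [ofRealCM]

theorem isSelfAdjoint_ofRealCM_comp (f : C(T, ℝ)) : IsSelfAdjoint (ofRealCM.comp f) := by
  ext t; simp [ofRealCM]

theorem ofRealCM_comp_mul_eq_self {χ : C(T, ℝ)} {f : C(T, ℂ)} (hf : tsupport f ⊆ {t | χ t = 1}) :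
    ofRealCM.comp χ * f = f := by
  ext t
  by_cases ht : t ∈ tsupport f
  · have hone : χ t = 1 := hf ht
    simp [ofRealCM, hone]
  · simp [image_eq_zero_of_notMem_tsupport ht]

variable [CompactSpace T]

theorem norm_ofRealCM_comp (f : C(T, ℝ)) : ‖ofRealCM.comp f‖ = ‖f‖ := by
  simp [ContinuousMap.norm_eq_iSup_norm, ofRealCM]

theorem exists_partitionOfUnity [NormalSpace T] {V : T → Set T} (hV : ∀ x, V x ∈ 𝓝 x) :
    ∃ (s : Finset T) (e : s → C(T, ℂ)), (∀ i, tsupport (e i) ⊆ V i) ∧ ∑ i, e i = 1 := by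
  obtain ⟨s, hs⟩ := CompactSpace.elim_nhds_subcover (fun x ↦ interior (V x))
    fun x ↦ interior_mem_nhds.2 (hV x)
  have hcover : Set.univ ⊆ ⋃ i : s, interior (V i) := by
    rw [← Set.top_eq_univ, ← hs, Set.iUnion_subtype]
  obtain ⟨e, he⟩ := PartitionOfUnity.exists_isSubordinate isClosed_univ
    (fun i : s ↦ interior (V i)) (fun _ ↦ isOpen_interior) hcover
  refine ⟨s, fun i ↦ ofRealCM.comp (e i), fun i ↦ ?_, ?_⟩
  · rw [tsupport_ofRealCM_comp]
    exact (he i).trans interior_subset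
  · ext t
    have hsum : ∑ i, e i t = 1 := by
      rw [← finsum_eq_sum_of_fintype, e.sum_eq_one (Set.mem_univ t)]
    simpa [ofRealCM] using congrArg Complex.ofReal hsum

theorem norm_mul_exp_smul_le {e g : C(T, ℂ)} {δ : ℝ} (hg : ∀ t ∈ tsupport e, ‖g t‖ ≤ δ) (z : ℂ) :
    ‖e * exp (z • g)‖ ≤ ‖e‖ * Real.exp (δ * ‖z‖) := by
  refine (ContinuousMap.norm_le _ (by positivity)).2 fun t ↦ ?_
  by_cases ht : t ∈ tsupport e
  · have hexp : exp (z • g) t = Complex.exp (z * g t) := by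
      let +nondep : NormedAlgebra ℚ C(T, ℂ) := .restrictScalars ℚ ℂ C(T, ℂ)
      rw [Complex.exp_eq_exp_ℂ]
      exact map_exp (ContinuousMap.evalStarAlgHom ℂ ℂ t) (continuous_eval_const t) _
    rw [ContinuousMap.mul_apply, norm_mul, hexp]
    gcongr
    · exact e.norm_coe_le_norm t
    · calc ‖Complex.exp (z * g t)‖ ≤ Real.exp ‖z * g t‖ := Complex.norm_exp_le_exp_norm _
        _ ≤ Real.exp (δ * ‖z‖) := by
          rw [norm_mul, mul_comm]
          gcongr
          exact hg t ht
  · rw [ContinuousMap.mul_apply, image_eq_zero_of_notMem_tsupport ht, zero_mul, norm_zero]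
    positivity

end ContinuousFunctions

section Commutator

variable {T : Type*} [TopologicalSpace T] [CompactSpace T]
  {A : Type*} [CStarAlgebra A] {ρ : C(T, ℂ) →⋆ₐ[ℂ] A} {a : A}
  {E : Type*} [NormedAddCommGroup E] [NormedSpace ℂ E] {q : A →L[ℂ] E}

theorem mul_expConj_mul_eq (e e' g : C(T, ℂ)) (z : ℂ) :
    ρ e * expConj (ρ g) a z * ρ e' = ρ (e * exp (z • g)) * a * ρ (e' * exp (z • -g)) := by
  let +nondep : NormedAlgebra ℚ C(T, ℂ) := .restrictScalars ℚ ℂ C(T, ℂ)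
  let +nondep : NormedAlgebra ℚ A := .restrictScalars ℚ ℂ A
  have hρ : Continuous ρ := AddMonoidHomClass.continuous_of_bound ρ 1 fun f ↦ by
    simpa using NonUnitalStarAlgHom.norm_apply_le ρ f
  rw [expConj, mul_comm e', map_mul, map_mul, map_exp ρ hρ, map_exp ρ hρ, map_smul, map_smul,
    map_neg]
  simp only [mul_assoc]

theorem norm_mul_expConj_mul_le {e e' f : C(T, ℂ)} {c : ℂ} {δ : ℝ}
    (he : ∀ t ∈ tsupport e, ‖f t - c‖ ≤ δ) (he' : ∀ t ∈ tsupport e', ‖f t - c‖ ≤ δ) (z : ℂ) :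
    ‖ρ e * expConj (ρ f) a z * ρ e'‖ ≤ ‖e‖ * ‖a‖ * ‖e'‖ * Real.exp (2 * δ * ‖z‖) := by
  set g := f - algebraMap ℂ C(T, ℂ) c
  have hshift : expConj (ρ f) a z = expConj (ρ g) a z := by
    rw [map_sub, AlgHomClass.commutes, expConj_sub_algebraMap]
  rw [hshift, mul_expConj_mul_eq]
  have hleft : ‖ρ (e * exp (z • g))‖ ≤ ‖e‖ * Real.exp (δ * ‖z‖) :=
    (NonUnitalStarAlgHom.norm_apply_le ρ _).trans (norm_mul_exp_smul_le he z)
  have hright : ‖ρ (e' * exp (z • -g))‖ ≤ ‖e'‖ * Real.exp (δ * ‖z‖) := by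
    refine (NonUnitalStarAlgHom.norm_apply_le ρ _).trans (norm_mul_exp_smul_le (fun t ht ↦ ?_) z)
    rw [ContinuousMap.neg_apply, norm_neg]
    exact he' t ht
  calc ‖ρ (e * exp (z • g)) * a * ρ (e' * exp (z • -g))‖
      ≤ ‖ρ (e * exp (z • g))‖ * ‖a‖ * ‖ρ (e' * exp (z • -g))‖ := norm_mul₃_le
    _ ≤ ‖e‖ * Real.exp (δ * ‖z‖) * ‖a‖ * (‖e'‖ * Real.exp (δ * ‖z‖)) := by gcongr
    _ = ‖e‖ * ‖a‖ * ‖e'‖ * Real.exp (2 * δ * ‖z‖) := by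
        rw [two_mul, add_mul, Real.exp_add]; ring

theorem isBigO_mul_expConj_mul
    (hq : ∀ φ ψ : C(T, ℂ), Disjoint (tsupport φ) (tsupport ψ) → q (ρ φ * a * ρ ψ) = 0)
    {e e' f : C(T, ℂ)} {δ : ℝ}
    (he : ∀ t ∈ tsupport e, ∀ t' ∈ tsupport e, ‖f t - f t'‖ ≤ δ)
    (he' : ∀ t ∈ tsupport e', ∀ t' ∈ tsupport e', ‖f t - f t'‖ ≤ δ) (l : Filter ℂ) :
    (fun z ↦ q (ρ e * expConj (ρ f) a z * ρ e')) =O[l] fun z ↦ Real.exp (2 * δ * ‖z‖) := by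
  by_cases hdisj : Disjoint (tsupport e) (tsupport e')
  · refine (isBigO_zero _ l).congr_left fun z ↦ ?_
    rw [mul_expConj_mul_eq, hq]
    exact hdisj.mono (tsupport_mul_subset_left (f := e)) (tsupport_mul_subset_left (f := e'))
  · obtain ⟨t, ht, ht'⟩ := Set.not_disjoint_iff.1 hdisj
    refine (q.isBigO_comp _ l).trans (.of_bound (‖e‖ * ‖a‖ * ‖e'‖) (.of_forall fun z ↦ ?_))
    rw [Real.norm_of_nonneg (Real.exp_nonneg _)]
    exact norm_mul_expConj_mul_le (fun s hs ↦ he s hs t ht) (fun s hs ↦ he' s hs t ht') z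

variable [NormalSpace T]

theorem hasMinimalExpType_expConj
    (hq : ∀ φ ψ : C(T, ℂ), Disjoint (tsupport φ) (tsupport ψ) → q (ρ φ * a * ρ ψ) = 0)
    (f : C(T, ℂ)) : HasMinimalExpType fun z ↦ q (expConj (ρ f) a z) := by
  intro ε hε
  obtain ⟨s, e, he, hsum⟩ := exists_partitionOfUnity (V := fun x ↦ f ⁻¹' Metric.ball (f x) (ε / 4))
    fun x ↦ f.continuous.continuousAt (Metric.ball_mem_nhds _ (by positivity))
  have hosc (i : s) : ∀ t ∈ tsupport (e i), ∀ t' ∈ tsupport (e i), ‖f t - f t'‖ ≤ ε / 2 := by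
    intro t ht t' ht'
    rw [← dist_eq_norm]
    linarith [dist_triangle_right (f t) (f t') (f i), Metric.mem_ball.1 (he i ht),
      Metric.mem_ball.1 (he i ht')]
  have hdecomp (z : ℂ) : q (expConj (ρ f) a z)
      = ∑ i, ∑ j, q (ρ (e i) * expConj (ρ f) a z * ρ (e j)) := by
    simp only [← map_sum, ← Finset.mul_sum, ← Finset.sum_mul, hsum, map_one, one_mul, mul_one]
  simp only [hdecomp]
  refine IsBigO.fun_sum fun i _ ↦ IsBigO.fun_sum fun j _ ↦ ?_
  simpa only [mul_div_cancel₀ ε two_ne_zero] using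
    isBigO_mul_expConj_mul hq (hosc i) (hosc j) (cobounded ℂ)

theorem map_commutator_eq_zero_of_isSelfAdjoint
    (hq : ∀ φ ψ : C(T, ℂ), Disjoint (tsupport φ) (tsupport ψ) → q (ρ φ * a * ρ ψ) = 0)
    {f : C(T, ℂ)} (hf : IsSelfAdjoint f) : q (ρ f * a - a * ρ f) = 0 := by
  have hbound (y : ℝ) : ‖q (expConj (ρ f) a (y * Complex.I))‖ ≤ ‖q‖ * ‖a‖ :=
    norm_expConj_mul_I (hf.map ρ) a y ▸ q.le_opNorm _
  have hconst (z : ℂ) : q (expConj (ρ f) a z) = q (expConj (ρ f) a 0) :=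
    (hasMinimalExpType_expConj hq f).apply_eq_apply
      (q.differentiable.comp (differentiable_expConj (ρ f) a)) hbound z 0
  have hderiv := q.hasFDerivAt.comp_hasDerivAt 0 (hasDerivAt_expConj_zero (ρ f) a)
  exact hderiv.unique ((hasDerivAt_const (0 : ℂ) _).congr_of_eventuallyEq (.of_forall hconst))

theorem commutator_mem_of_disjoint_tsupport {J : Submodule ℂ A} (hJ : IsClosed (J : Set A))
    (ha : ∀ φ ψ : C(T, ℂ), Disjoint (tsupport φ) (tsupport ψ) → ρ φ * a * ρ ψ ∈ J)
    (f : C(T, ℂ)) : ρ f * a - a * ρ f ∈ J := by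
  have hself {g : C(T, ℂ)} (hg : IsSelfAdjoint g) : ρ g * a - a * ρ g ∈ J := by
    have hq (φ ψ : C(T, ℂ)) (h : Disjoint (tsupport φ) (tsupport ψ)) :
        J.mkQL (ρ φ * a * ρ ψ) = 0 := (Submodule.Quotient.mk_eq_zero J).2 (ha φ ψ h)
    exact (Submodule.Quotient.mk_eq_zero J).1 (map_commutator_eq_zero_of_isSelfAdjoint hq hg)
  have hsplit : ρ f * a - a * ρ f =
      (ρ (realPart f) * a - a * ρ (realPart f))
        + Complex.I • (ρ (imaginaryPart f) * a - a * ρ (imaginaryPart f)) := by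
    conv_lhs => rw [← realPart_add_I_smul_imaginaryPart f]
    simp only [map_add, map_smul, add_mul, mul_add, smul_mul_assoc, mul_smul_comm, smul_sub]
    abel
  rw [hsplit]
  exact J.add_mem (hself (realPart f).2) (J.smul_mem _ (hself (imaginaryPart f).2))

end Commutator

section Parametrix

variable {H : Type*} [NormedAddCommGroup H] [InnerProductSpace ℂ H] [CompleteSpace H]

theorem isFredholm_of_left_right_parametrix {P S S' : H →L[ℂ] H}
    (hleft : IsCompactOperator ⇑(S * P - 1)) (hright : IsCompactOperator ⇑(P * S' - 1)) :
    IsFredholm P := by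
  refine ⟨S, hleft, ?_⟩
  have hPS : P * S - 1 = P * (S * P - 1) * S' - P * S * (P * S' - 1) + (P * S' - 1) := by
    noncomm_ring
  change IsCompactOperator ⇑(P * S - 1)
  rw [hPS]
  exact (((hleft.clm_comp P).comp_clm S').sub (hright.clm_comp (P * S))).add hright

variable {T : Type*} [TopologicalSpace T] {π : C(T, ℂ) →⋆ₐ[ℂ] (H →L[ℂ] H)} {P : H →L[ℂ] H}

/-- Membership of `P` in the algebra `Ψ_T(H)` of pseudolocal operators, with disjointness of
supports read as disjointness of the closed supports. -/
def IsPseudolocal (π : C(T, ℂ) →⋆ₐ[ℂ] (H →L[ℂ] H)) (P : H →L[ℂ] H) : Prop :=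
  ∀ φ ψ : C(T, ℂ), Disjoint (tsupport φ) (tsupport ψ) →
    IsCompactOperator ⇑((π φ).comp (P.comp (π ψ)))

variable [CompactSpace T] [NormalSpace T]

theorem IsPseudolocal.isCompactOperator_commutator (hP : IsPseudolocal π P) (f : C(T, ℂ)) :
    IsCompactOperator ⇑(π f * P - P * π f) :=
  commutator_mem_of_disjoint_tsupport (J := compactOperator (RingHom.id ℂ) H H)
    isClosed_setOfPred_isCompactOperator hP f

theorem IsPseudolocal.isFredholm (hP : IsPseudolocal π P)
    (hloc : ∀ x, LocallyInvertibleAt π P x) : IsFredholm P := by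
  choose V hV Q Q' hQ using hloc
  obtain ⟨s, e, he, hsum⟩ := exists_partitionOfUnity hV
  have hπsum : ∑ i, π (e i) = 1 := by rw [← map_sum, hsum, map_one]
  have hQP (i : s) : Q i * (P * π (e i)) = π (e i) := (hQ i (e i) (he i)).1
  have hPQ (i : s) : π (e i) * (P * Q' i) = π (e i) := (hQ i (e i) (he i)).2
  have hleft : (∑ i : s, Q i * π (e i)) * P - 1 = ∑ i : s, Q i * (π (e i) * P - P * π (e i)) := by
    simp only [mul_sub, Finset.sum_sub_distrib, hQP, hπsum, Finset.sum_mul, mul_assoc]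
  have hright : P * (∑ i : s, π (e i) * Q' i) - 1
      = ∑ i : s, -(π (e i) * P - P * π (e i)) * Q' i := by
    simp only [neg_sub, sub_mul, Finset.sum_sub_distrib, mul_assoc, hPQ, hπsum, Finset.mul_sum]
  refine isFredholm_of_left_right_parametrix (S := ∑ i : s, Q i * π (e i))
    (S' := ∑ i : s, π (e i) * Q' i) ?_ ?_
  · rw [hleft]
    exact Submodule.sum_mem (compactOperator (RingHom.id ℂ) H H) fun i _ ↦
      (hP.isCompactOperator_commutator (e i)).clm_comp (Q i)
  · rw [hright]
    exact Submodule.sum_mem (compactOperator (RingHom.id ℂ) H H) fun i _ ↦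
      (hP.isCompactOperator_commutator (e i)).neg.comp_clm (Q' i)

end Parametrix

section Units

variable {R : Type*} [Ring R] {p s c : R}

theorem exists_mul_mul_eq_of_isUnit_one_add (h : IsUnit (1 + (s * p - 1) * c)) :
    ∃ q : R, ∀ m, c * m = m → q * (p * m) = m := by
  obtain ⟨u, hu⟩ := h
  refine ⟨↑u⁻¹ * s, fun m hm ↦ ?_⟩
  have hsp : s * (p * m) = u * m := by
    rw [hu, add_mul, mul_assoc _ c, hm]; noncomm_ring
  rw [mul_assoc, hsp, Units.inv_mul_cancel_left]

theorem exists_mul_mul_eq_of_isUnit_one_add' (h : IsUnit (1 + c * (p * s - 1))) :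
    ∃ q : R, ∀ m, m * c = m → m * (p * q) = m := by
  obtain ⟨u, hu⟩ := h
  refine ⟨s * ↑u⁻¹, fun m hm ↦ ?_⟩
  have hps : m * (p * s) = m * u := by
    rw [hu, mul_add, ← mul_assoc m c, hm]; noncomm_ring
  rw [← mul_assoc p, ← mul_assoc, hps, Units.mul_inv_cancel_right]

theorem isUnit_one_add_of_norm_lt_one {R : Type*} [NormedRing R] [HasSummableGeomSeries R]
    {k : R} (hk : ‖k‖ < 1) : IsUnit (1 + k) := by
  simpa using isUnit_one_sub_of_norm_lt_one (x := -k) (by rwa [norm_neg])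

-- `‖kc‖² = ‖c k⋆k c‖` avoids Schauder's theorem on adjoints of compact operators.
theorem norm_mul_sq_le_of_isSelfAdjoint {R : Type*} [NonUnitalNormedRing R] [StarRing R]
    [CStarRing R] {c : R} (hc : IsSelfAdjoint c) (hc_le : ‖c‖ ≤ 1) (k : R) :
    ‖k * c‖ ^ 2 ≤ ‖c * (star k * k)‖ :=
  calc ‖k * c‖ ^ 2 = ‖c * (star k * k) * c‖ := by
        rw [sq, ← CStarRing.norm_star_mul_self, star_mul, hc.star_eq]
        simp only [mul_assoc]
    _ ≤ ‖c * (star k * k)‖ * ‖c‖ := norm_mul_le _ _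
    _ ≤ ‖c * (star k * k)‖ := mul_le_of_le_one_right (norm_nonneg _) hc_le

end Units

section Cutoff

variable {T : Type*} [TopologicalSpace T]

/-- The admissible functions in the property of strong convergence to `0`: continuous maps
`T → [0, 1]` that equal `1` near `x` and are supported in `V`. -/
structure IsCutoff (χ : C(T, ℝ)) (x : T) (V : Set T) : Prop where
  mem_Icc : ∀ t, χ t ∈ Set.Icc (0 : ℝ) 1
  eventually_eq_one : ∀ᶠ t in 𝓝 x, χ t = 1
  tsupport_subset : tsupport χ ⊆ V

theorem IsCutoff.mono {χ : C(T, ℝ)} {x : T} {V W : Set T} (hχ : IsCutoff χ x V) (hVW : V ⊆ W) :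
    IsCutoff χ x W :=
  { hχ with tsupport_subset := hχ.tsupport_subset.trans hVW }

variable [CompactSpace T]

theorem exists_isCutoff [R1Space T] {x : T} {V : Set T} (hV : V ∈ 𝓝 x) :
    ∃ χ : C(T, ℝ), IsCutoff χ x V := by
  obtain ⟨W, hW, hWclosed, hWV⟩ := exists_mem_nhds_isClosed_subset (interior_mem_nhds.2 hV)
  obtain ⟨χ, hone, -, hsupp, hmem⟩ := exists_continuousMap_one_of_isCompact_subset_isOpen
    hWclosed.isCompact isOpen_interior hWV
  exact ⟨χ, hmem, mem_of_superset hW hone, hsupp.trans interior_subset⟩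

theorem IsCutoff.norm_map_le_one {A : Type*} [CStarAlgebra A] (ρ : C(T, ℂ) →⋆ₐ[ℂ] A)
    {χ : C(T, ℝ)} {x : T} {V : Set T} (hχ : IsCutoff χ x V) : ‖ρ (ofRealCM.comp χ)‖ ≤ 1 := by
  refine (NonUnitalStarAlgHom.norm_apply_le ρ _).trans ?_
  rw [norm_ofRealCM_comp, ContinuousMap.norm_le _ zero_le_one]
  intro t
  rw [Real.norm_of_nonneg (hχ.mem_Icc t).1]
  exact (hχ.mem_Icc t).2

variable {H : Type*} [NormedAddCommGroup H] [InnerProductSpace ℂ H] [CompleteSpace H]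
  {π : C(T, ℂ) →⋆ₐ[ℂ] (H →L[ℂ] H)} {P : H →L[ℂ] H} {ε : ℝ}

theorem exists_nhds_forall_isCutoff_norm_apply_lt (hπ : StrongConvergenceToZero π) {B : Set H}
    (hB : IsCompact B) (x : T) (hε : 0 < ε) :
    ∃ V ∈ 𝓝 x, ∀ χ, IsCutoff χ x V → ∀ h ∈ B, ‖π (ofRealCM.comp χ) h‖ < ε := by
  refine hB.induction_on
    (p := fun B ↦ ∃ V ∈ 𝓝 x, ∀ χ, IsCutoff χ x V → ∀ h ∈ B, ‖π (ofRealCM.comp χ) h‖ < ε)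
    ⟨Set.univ, univ_mem, by simp⟩ ?_ ?_ fun h _ ↦ ?_
  · rintro B B' hBB' ⟨V, hV, hlt⟩
    exact ⟨V, hV, fun χ hχ h hh ↦ hlt χ hχ h (hBB' hh)⟩
  · rintro B B' ⟨V, hV, hlt⟩ ⟨V', hV', hlt'⟩
    refine ⟨V ∩ V', inter_mem hV hV', fun χ hχ h hh ↦ hh.elim ?_ ?_⟩
    · exact hlt χ (hχ.mono Set.inter_subset_left) h
    · exact hlt' χ (hχ.mono Set.inter_subset_right) h
  · obtain ⟨V, hV, hlt⟩ := hπ x h (ε / 2) (half_pos hε)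
    refine ⟨Metric.ball h (ε / 2),
      mem_nhdsWithin_of_mem_nhds (Metric.ball_mem_nhds h (half_pos hε)), V, hV, fun χ hχ k hk ↦ ?_⟩
    have hkh : ‖π (ofRealCM.comp χ) (k - h)‖ ≤ ‖k - h‖ :=
      (ContinuousLinearMap.le_of_opNorm_le _ (hχ.norm_map_le_one π) _).trans_eq (one_mul _)
    calc ‖π (ofRealCM.comp χ) k‖
        = ‖π (ofRealCM.comp χ) (k - h) + π (ofRealCM.comp χ) h‖ := by
          rw [← map_add, sub_add_cancel]
      _ ≤ ‖k - h‖ + ‖π (ofRealCM.comp χ) h‖ := (norm_add_le _ _).trans (by gcongr)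
      _ < ε / 2 + ε / 2 := add_lt_add (mem_ball_iff_norm.1 hk)
          (hlt χ hχ.mem_Icc hχ.eventually_eq_one hχ.tsupport_subset)
      _ = ε := add_halves ε

theorem exists_nhds_forall_isCutoff_norm_map_mul_le (hπ : StrongConvergenceToZero π)
    {K : H →L[ℂ] H} (hK : IsCompactOperator ⇑K) (x : T) (hε : 0 < ε) :
    ∃ V ∈ 𝓝 x, ∀ χ, IsCutoff χ x V → ‖π (ofRealCM.comp χ) * K‖ ≤ ε := by
  have hcompact := hK.isCompact_closure_image_closedBall (f := (K : H →ₗ[ℂ] H)) 1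
  obtain ⟨V, hV, hlt⟩ := exists_nhds_forall_isCutoff_norm_apply_lt hπ hcompact x hε
  refine ⟨V, hV, fun χ hχ ↦
    ContinuousLinearMap.opNorm_le_of_unit_norm (𝕜 := ℂ) hε.le fun v hv ↦ ?_⟩
  exact (hlt χ hχ (K v) (subset_closure ⟨v, by simp [hv], rfl⟩)).le

theorem exists_nhds_forall_isCutoff_norm_mul_map_le (hπ : StrongConvergenceToZero π)
    {K : H →L[ℂ] H} (hK : IsCompactOperator ⇑K) (x : T) (hε : 0 < ε) :
    ∃ V ∈ 𝓝 x, ∀ χ, IsCutoff χ x V → ‖K * π (ofRealCM.comp χ)‖ ≤ ε := by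
  obtain ⟨V, hV, hle⟩ := exists_nhds_forall_isCutoff_norm_map_mul_le hπ
    (K := star K * K) (hK.clm_comp (star K)) x (pow_pos hε 2)
  refine ⟨V, hV, fun χ hχ ↦ (sq_le_sq₀ (norm_nonneg _) hε.le).1 ?_⟩
  exact (norm_mul_sq_le_of_isSelfAdjoint ((isSelfAdjoint_ofRealCM_comp χ).map π)
    (hχ.norm_map_le_one π) K).trans (hle χ hχ)

theorem locallyInvertibleAt_of_isFredholm [R1Space T] (hπ : StrongConvergenceToZero π)
    (hP : IsFredholm P) (x : T) : LocallyInvertibleAt π P x := by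
  obtain ⟨S, hSP, hPS⟩ := hP
  obtain ⟨V, hV, hVle⟩ := exists_nhds_forall_isCutoff_norm_mul_map_le hπ hSP x one_half_pos
  obtain ⟨W, hW, hWle⟩ := exists_nhds_forall_isCutoff_norm_map_mul_le hπ hPS x one_half_pos
  obtain ⟨χ, hχ⟩ := exists_isCutoff (inter_mem hV hW)
  set c := π (ofRealCM.comp χ)
  have hunit : IsUnit (1 + (S * P - 1) * c) := isUnit_one_add_of_norm_lt_one
    ((hVle χ (hχ.mono Set.inter_subset_left)).trans_lt one_half_lt_one)
  have hunit' : IsUnit (1 + c * (P * S - 1)) := isUnit_one_add_of_norm_lt_one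
    ((hWle χ (hχ.mono Set.inter_subset_right)).trans_lt one_half_lt_one)
  obtain ⟨Q, hQ⟩ := exists_mul_mul_eq_of_isUnit_one_add hunit
  obtain ⟨Q', hQ'⟩ := exists_mul_mul_eq_of_isUnit_one_add' hunit'
  refine ⟨{t | χ t = 1}, hχ.eventually_eq_one, Q, Q', fun f hf ↦ ⟨hQ _ ?_, hQ' _ ?_⟩⟩
  · rw [← map_mul, ofRealCM_comp_mul_eq_self hf]
  · rw [← map_mul, mul_comm, ofRealCM_comp_mul_eq_self hf]

end Cutoff

end Simonenko

open Simonenko in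
theorem simonenko_localization_principle_general
    {T : Type*} [TopologicalSpace T] [CompactSpace T] [R1Space T]
    {H : Type*} [NormedAddCommGroup H] [InnerProductSpace ℂ H] [CompleteSpace H]
    (π : C(T, ℂ) →⋆ₐ[ℂ] (H →L[ℂ] H)) (hπ : StrongConvergenceToZero π)
    (P : H →L[ℂ] H) (hP : IsPseudolocal π P) :
    (∀ x : T, LocallyInvertibleAt π P x) ↔ IsFredholm P :=
  ⟨hP.isFredholm, locallyInvertibleAt_of_isFredholm hπ⟩

/-- **General Simonenko localization principle.**  Let `T` be a compact Hausdorff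
space, `H` a complex Hilbert space and `π : C(T) → B(H)` a unital injective
`*`-homomorphism whose image meets the compact operators only in `0`, having the
property of strong convergence to `0`.  If `P ∈ Ψ_T(H)`, i.e. `M_φ P M_ψ` is compact
whenever `φ, ψ ∈ C(T)` have disjoint supports, then `P` is locally invertible on `T`
if, and only if, `P` is Fredholm. -/
theorem simonenko_localization_principle
    {T : Type*} [TopologicalSpace T] [CompactSpace T] [T2Space T]
    {H : Type*} [NormedAddCommGroup H] [InnerProductSpace ℂ H] [CompleteSpace H]
    (π : C(T, ℂ) →⋆ₐ[ℂ] (H →L[ℂ] H))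
    (hπ_inj : Function.Injective π)
    (hπ_noncpt : ∀ f : C(T, ℂ), IsCompactOperator ⇑(π f) → f = 0)
    (hπ_conv : StrongConvergenceToZero π)
    (P : H →L[ℂ] H)
    (hP : ∀ φ ψ : C(T, ℂ), Disjoint (tsupport φ) (tsupport ψ) →
      IsCompactOperator ⇑((π φ).comp (P.comp (π ψ)))) :
    (∀ x : T, LocallyInvertibleAt π P x) ↔ IsFredholm P :=
  simonenko_localization_principle_general π hπ_conv P hP
end

section
/- The operator D̂ := Σ_{γ∈Γ} Q(D_γ⊗Id)Q(1⊗R_γ) on H_Γ commutes with the representation T⊗L: D̂∘(T_{γ'}⊗L_{γ'}) = (T_{γ'}⊗L_{γ'})∘D̂ for all γ' ∈ Γ. In particular, D̂ maps the closed subspace H_Γ^{T⊗L} of (T⊗L)-invariant vectors into itself. -/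
open Finset

variable {Γ : Type*} [Group Γ] [Fintype Γ]
variable {H : Type*} [NormedAddCommGroup H] [InnerProductSpace ℂ H]

/-- The operator `1 ⊗ R_γ` on `H_Γ = {u : Γ → H}`: `((1 ⊗ R_γ) u)(γ') = u (γ' γ)`. -/
def Rop (H : Type*) [NormedAddCommGroup H] [InnerProductSpace ℂ H]
    (γ : Γ) : (Γ → H) →ₗ[ℂ] (Γ → H) where
  toFun u := fun γ' => u (γ' * γ)
  map_add' _ _ := rfl
  map_smul' _ _ := rfl

/-- The operator `T_γ ⊗ L_γ` on `H_Γ`: `((T_γ ⊗ L_γ) u)(γ') = T_γ (u (γ⁻¹ γ'))`. -/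
def TLop (T : Γ →* (H ≃ₗᵢ[ℂ] H)) (γ : Γ) : (Γ → H) →ₗ[ℂ] (Γ → H) where
  toFun u := fun γ' => T γ (u (γ⁻¹ * γ'))
  map_add' u v := by funext γ'; simp
  map_smul' c u := by funext γ'; simp

/-- The operator `Q` on `H_Γ`: `(Q u)(γ') = T_{γ'} (u (γ'⁻¹))`. -/
def Qop (T : Γ →* (H ≃ₗᵢ[ℂ] H)) : (Γ → H) →ₗ[ℂ] (Γ → H) where
  toFun u := fun γ' => T γ' (u γ'⁻¹)
  map_add' u v := by funext γ'; simp
  map_smul' c u := by funext γ'; simp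

/-- The normalized inner product `⟨u, v⟩ = (1/|Γ|) ∑_γ ⟨u γ, v γ⟩` on `H_Γ`
(corresponding to the normalized counting measure on `Γ`). -/
noncomputable def innG (u v : Γ → H) : ℂ :=
  (Fintype.card Γ : ℂ)⁻¹ * ∑ γ : Γ, (inner ℂ (u γ) (v γ) : ℂ)

/-- The operator `D ⊗ Id` on `H_Γ`: `((D ⊗ Id) u)(γ) = D (u γ)`. -/
def Dtensor (Γ : Type*) [Group Γ] [Fintype Γ]
    (D : H →L[ℂ] H) : (Γ → H) →ₗ[ℂ] (Γ → H) where
  toFun u := fun γ => D (u γ)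
  map_add' u v := by funext γ; simp
  map_smul' c u := by funext γ; simp

/-- The uniformized operator `D̂ = ∑_{γ ∈ Γ} Q (D_γ ⊗ Id) Q (1 ⊗ R_γ)` on `H_Γ`. -/
def Dhat (T : Γ →* (H ≃ₗᵢ[ℂ] H)) (D : Γ → (H →L[ℂ] H)) :
    (Γ → H) →ₗ[ℂ] (Γ → H) :=
  ∑ γ : Γ, (Qop T).comp ((Dtensor Γ (D γ)).comp ((Qop T).comp (Rop H γ)))

/-!
`Q` is an involution intertwining `T ⊗ L` with `1 ⊗ R`, while `1 ⊗ R` commutes with `D_γ ⊗ Id`.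
So each `Q (D_γ ⊗ Id) Q` commutes with `T ⊗ L`, as does each right translation `1 ⊗ R_γ`.
-/

section Intertwining

omit [Fintype Γ]

theorem Qop_mul_self (T : Γ →* (H ≃ₗᵢ[ℂ] H)) :
    (Qop T * Qop T : Module.End ℂ (Γ → H)) = 1 := by
  ext1 u
  funext x
  change T x (T x⁻¹ (u x⁻¹⁻¹)) = u x
  rw [map_inv, LinearIsometryEquiv.inv_def, LinearIsometryEquiv.apply_symm_apply, inv_inv]

theorem semiconjBy_Qop_TLop_Rop (T : Γ →* (H ≃ₗᵢ[ℂ] H)) (γ : Γ) :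
    SemiconjBy (Qop T : Module.End ℂ (Γ → H)) (TLop T γ) (Rop H γ) := by
  ext1 u
  funext x
  change T x (T γ (u (γ⁻¹ * x⁻¹))) = T (x * γ) (u (x * γ)⁻¹)
  rw [map_mul, LinearIsometryEquiv.coe_mul, Function.comp_apply, mul_inv_rev]

theorem semiconjBy_Qop_Rop_TLop (T : Γ →* (H ≃ₗᵢ[ℂ] H)) (γ : Γ) :
    SemiconjBy (Qop T : Module.End ℂ (Γ → H)) (Rop H γ) (TLop T γ) :=
  calc (Qop T * Rop H γ : Module.End ℂ (Γ → H))
      = Qop T * (Rop H γ * Qop T) * Qop T := by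
        rw [mul_assoc, mul_assoc, Qop_mul_self, mul_one]
    _ = Qop T * (Qop T * TLop T γ) * Qop T := by rw [(semiconjBy_Qop_TLop_Rop T γ).eq]
    _ = TLop T γ * Qop T := by rw [← mul_assoc, Qop_mul_self, one_mul]

theorem commute_Qop_conj_TLop (T : Γ →* (H ≃ₗᵢ[ℂ] H)) {A : Module.End ℂ (Γ → H)} {γ : Γ}
    (hA : Commute A (Rop H γ)) : Commute (Qop T * (A * Qop T)) (TLop T γ) :=
  (semiconjBy_Qop_Rop_TLop T γ).mul_left (SemiconjBy.mul_left hA (semiconjBy_Qop_TLop_Rop T γ))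

theorem commute_Rop_TLop (T : Γ →* (H ≃ₗᵢ[ℂ] H)) (γ γ' : Γ) :
    Commute (Rop H γ : Module.End ℂ (Γ → H)) (TLop T γ') := by
  ext1 u
  funext x
  change T γ' (u (γ'⁻¹ * (x * γ))) = T γ' (u (γ'⁻¹ * x * γ))
  rw [mul_assoc]

end Intertwining

theorem commute_Dtensor_Rop (D : H →L[ℂ] H) (γ : Γ) :
    Commute (Dtensor Γ D : Module.End ℂ (Γ → H)) (Rop H γ) :=
  rfl

theorem commute_Dhat_TLop (T : Γ →* (H ≃ₗᵢ[ℂ] H)) (D : Γ → (H →L[ℂ] H)) (γ' : Γ) :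
    Commute (Dhat T D : Module.End ℂ (Γ → H)) (TLop T γ') :=
  Commute.sum_left _ _ _ fun γ _ =>
    (commute_Qop_conj_TLop T (commute_Dtensor_Rop (D γ) γ')).mul_left (commute_Rop_TLop T γ γ')

/-- `D̂ = ∑_γ Q (D_γ ⊗ Id) Q (1 ⊗ R_γ)` commutes with the representation `T ⊗ L`;
in particular it maps the subspace of `(T ⊗ L)`-invariant vectors into itself. -/
theorem Dhat_commutes_TL (T : Γ →* (H ≃ₗᵢ[ℂ] H)) (D : Γ → (H →L[ℂ] H)) :
    (∀ γ' : Γ, (Dhat T D).comp (TLop T γ') = (TLop T γ').comp (Dhat T D)) ∧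
    ∀ u : Γ → H, (∀ γ : Γ, TLop T γ u = u) →
      ∀ γ : Γ, TLop T γ (Dhat T D u) = Dhat T D u := by
  refine ⟨fun γ' => (commute_Dhat_TLop T D γ').eq, fun u hu γ => ?_⟩
  exact Function.IsFixedPt.map (hu γ) (LinearMap.congr_fun (commute_Dhat_TLop T D γ).eq)
end

section
/- With D̂ := Σ_{γ∈Γ} Q(D_γ⊗Id)Q(1⊗R_γ), one has the identity Q D̂ Q = Σ_{γ∈Γ} (D_γ⊗Id)(T_γ⊗L_γ) as bounded operators on H_Γ. -/
open Finset

variable {Γ : Type*} [Group Γ] [Fintype Γ]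
variable {H : Type*} [NormedAddCommGroup H] [InnerProductSpace ℂ H]

section ArbitraryGroup

variable {G : Type*} [Group G] (T : G →* (H ≃ₗᵢ[ℂ] H))

theorem Qop_comp_Qop : Qop T ∘ₗ Qop T = LinearMap.id := by
  refine LinearMap.ext fun u => funext fun x => ?_
  calc
    Qop T (Qop T u) x = (T x * T x⁻¹) (u x⁻¹⁻¹) := rfl
    _ = (1 : H ≃ₗᵢ[ℂ] H) (u x) := by rw [← map_mul, mul_inv_cancel, map_one, inv_inv]
    _ = u x := rfl

theorem Qop_comp_Rop_comp_Qop (g : G) : Qop T ∘ₗ Rop H g ∘ₗ Qop T = TLop T g := by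
  refine LinearMap.ext fun u => funext fun x => ?_
  calc
    Qop T (Rop H g (Qop T u)) x = (T x * T (x⁻¹ * g)) (u (x⁻¹ * g)⁻¹) := rfl
    _ = T g (u (g⁻¹ * x)) := by rw [← map_mul, mul_inv_cancel_left, mul_inv_rev, inv_inv]

theorem Qop_conj_Qop_comp_comp_Qop_comp_Rop (A : (G → H) →ₗ[ℂ] (G → H)) (g : G) :
    Qop T ∘ₗ (Qop T ∘ₗ A ∘ₗ Qop T ∘ₗ Rop H g) ∘ₗ Qop T = A ∘ₗ TLop T g := by
  calc
    Qop T ∘ₗ (Qop T ∘ₗ A ∘ₗ Qop T ∘ₗ Rop H g) ∘ₗ Qop T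
      = (Qop T ∘ₗ Qop T) ∘ₗ A ∘ₗ (Qop T ∘ₗ Rop H g ∘ₗ Qop T) := by
        simp only [LinearMap.comp_assoc]
    _ = A ∘ₗ TLop T g := by
        rw [Qop_comp_Qop, Qop_comp_Rop_comp_Qop, LinearMap.id_comp]

theorem Qop_Dhat_Qop_eq_general (s : Finset G) (A : G → ((G → H) →ₗ[ℂ] (G → H))) :
    Qop T ∘ₗ (∑ g ∈ s, Qop T ∘ₗ A g ∘ₗ Qop T ∘ₗ Rop H g) ∘ₗ Qop T
      = ∑ g ∈ s, A g ∘ₗ TLop T g := by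
  calc
    Qop T ∘ₗ (∑ g ∈ s, Qop T ∘ₗ A g ∘ₗ Qop T ∘ₗ Rop H g) ∘ₗ Qop T
      = ∑ g ∈ s, Qop T ∘ₗ (Qop T ∘ₗ A g ∘ₗ Qop T ∘ₗ Rop H g) ∘ₗ Qop T := by
        simp only [← Module.End.mul_eq_comp, sum_mul, mul_sum]
    _ = ∑ g ∈ s, A g ∘ₗ TLop T g :=
        sum_congr rfl fun g _ => Qop_conj_Qop_comp_comp_Qop_comp_Rop T (A g) g

end ArbitraryGroup

/-- `Q D̂ Q = ∑_{γ ∈ Γ} (D_γ ⊗ Id) (T_γ ⊗ L_γ)` as operators on `H_Γ`. -/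
theorem Qop_Dhat_Qop_eq (T : Γ →* (H ≃ₗᵢ[ℂ] H)) (D : Γ → (H →L[ℂ] H)) :
    (Qop T).comp ((Dhat T D).comp (Qop T))
      = ∑ γ : Γ, (Dtensor Γ (D γ)).comp (TLop T γ) :=
  Qop_Dhat_Qop_eq_general T univ fun γ => Dtensor Γ (D γ)
end

section
/- (Uniformization) Let 𝒟 := Σ_{γ∈Γ} D_γ T_γ ∈ B(H) and D̂ := Σ_{γ∈Γ} Q(D_γ⊗Id)Q(1⊗R_γ) ∈ B(H_Γ). Then D̂∘(Q∘V) = (Q∘V)∘𝒟. Consequently, under the unitary isomorphism Q∘V : H ≅ H_Γ^{T⊗L}, the restriction of D̂ to the subspace of (T⊗L)-invariant vectors is unitarily equivalent to 𝒟. -/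
open Finset

variable {Γ : Type*} [Group Γ] [Fintype Γ]
variable {H : Type*} [NormedAddCommGroup H] [InnerProductSpace ℂ H]

/-- The map `V : H → H_Γ`, `(V s)(γ) = s`. -/
def Vop (Γ H : Type*) [Group Γ] [Fintype Γ]
    [NormedAddCommGroup H] [InnerProductSpace ℂ H] : H →ₗ[ℂ] (Γ → H) where
  toFun s := fun _ => s
  map_add' _ _ := rfl
  map_smul' _ _ := rfl

/-- The `Γ`-operator `𝒟 = ∑_{γ ∈ Γ} D_γ T_γ` on `H`. -/
def Dop (T : Γ →* (H ≃ₗᵢ[ℂ] H)) (D : Γ → (H →L[ℂ] H)) : H →ₗ[ℂ] H :=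
  ∑ γ : Γ, ((D γ) : H →ₗ[ℂ] H).comp ((T γ).toLinearEquiv : H →ₗ[ℂ] H)

omit [Fintype Γ] in
theorem Qop_comp_Qop_s9 (T : Γ →* (H ≃ₗᵢ[ℂ] H)) : (Qop T).comp (Qop T) = LinearMap.id := by
  ext1 u
  funext γ
  calc T γ (T γ⁻¹ (u γ⁻¹⁻¹))
      = (T γ * T γ⁻¹) (u γ⁻¹⁻¹) := rfl
    _ = T 1 (u γ) := by rw [← map_mul, mul_inv_cancel, inv_inv]
    _ = u γ := by rw [map_one, LinearIsometryEquiv.coe_one, id]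

theorem Rop_comp_QV_eq_QV_comp_T (T : Γ →* (H ≃ₗᵢ[ℂ] H)) (γ : Γ) :
    (Rop H γ).comp ((Qop T).comp (Vop Γ H))
      = ((Qop T).comp (Vop Γ H)).comp ((T γ).toLinearEquiv : H →ₗ[ℂ] H) := by
  ext s η
  -- `(Q V s)(η) = T_η s`, so the claim is `T_{η γ} s = T_η (T_γ s)`.
  exact congrArg (· s) (map_mul T η γ)

theorem Dtensor_comp_Vop (D : H →L[ℂ] H) :
    (Dtensor Γ D).comp (Vop Γ H) = (Vop Γ H).comp (D : H →ₗ[ℂ] H) :=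
  rfl

theorem Dhat_summand_comp_QV_eq_QV_comp_Dop_summand
    (T : Γ →* (H ≃ₗᵢ[ℂ] H)) (D : H →L[ℂ] H) (γ : Γ) :
    ((Qop T).comp ((Dtensor Γ D).comp ((Qop T).comp (Rop H γ)))).comp
        ((Qop T).comp (Vop Γ H))
      = ((Qop T).comp (Vop Γ H)).comp
          ((D : H →ₗ[ℂ] H).comp ((T γ).toLinearEquiv : H →ₗ[ℂ] H)) := by
  let Q := Qop T
  let V := Vop Γ H
  let Tγ : H →ₗ[ℂ] H := (T γ).toLinearEquiv
  calc Q ∘ₗ Dtensor Γ D ∘ₗ Q ∘ₗ (Rop H γ ∘ₗ Q ∘ₗ V)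
      = Q ∘ₗ Dtensor Γ D ∘ₗ Q ∘ₗ ((Q ∘ₗ V) ∘ₗ Tγ) := by rw [Rop_comp_QV_eq_QV_comp_T]
    _ = Q ∘ₗ Dtensor Γ D ∘ₗ (Q ∘ₗ Q) ∘ₗ V ∘ₗ Tγ := rfl
    _ = Q ∘ₗ (Dtensor Γ D ∘ₗ V) ∘ₗ Tγ := by
        rw [Qop_comp_Qop_s9, LinearMap.id_comp, LinearMap.comp_assoc]
    _ = Q ∘ₗ (V ∘ₗ (D : H →ₗ[ℂ] H)) ∘ₗ Tγ := by rw [Dtensor_comp_Vop]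

/-- **Uniformization.**  `D̂ ∘ (Q ∘ V) = (Q ∘ V) ∘ 𝒟`; consequently, under the
unitary isomorphism `Q ∘ V : H ≅ H_Γ^{T⊗L}`, the restriction of `D̂` to the
subspace of `(T ⊗ L)`-invariant vectors is unitarily equivalent to `𝒟`. -/
theorem Dhat_comp_QV_eq_QV_comp_Dop (T : Γ →* (H ≃ₗᵢ[ℂ] H)) (D : Γ → (H →L[ℂ] H)) :
    (Dhat T D).comp ((Qop T).comp (Vop Γ H))
      = ((Qop T).comp (Vop Γ H)).comp (Dop T D) := by
  calc (Dhat T D).comp ((Qop T).comp (Vop Γ H))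
      = ∑ γ : Γ, ((Qop T).comp ((Dtensor Γ (D γ)).comp ((Qop T).comp (Rop H γ)))).comp
          ((Qop T).comp (Vop Γ H)) := by
        ext1 s
        simp only [Dhat, LinearMap.comp_apply, LinearMap.sum_apply]
    _ = ∑ γ : Γ, ((Qop T).comp (Vop Γ H)).comp
          ((D γ : H →ₗ[ℂ] H).comp ((T γ).toLinearEquiv : H →ₗ[ℂ] H)) :=
        sum_congr rfl fun γ _ => Dhat_summand_comp_QV_eq_QV_comp_Dop_summand T (D γ) γ
    _ = ((Qop T).comp (Vop Γ H)).comp (Dop T D) := by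
        ext1 s
        simp only [Dop, LinearMap.comp_apply, LinearMap.sum_apply, map_sum]
end
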